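/- arXiv:2502.17292 — 2 statements merged into one kernel-verified Lean document; each statement's English description precedes it below -/
import Mathlib

section
/- Let d ≥ 1, let c ≥ 1, and let z_1, …, z_n ∈ ℝ^d satisfy ‖z_i‖₂ ≤ 1 for all i. For k = 1, …, n define the Gram matrix A_k = c·I_d + Σ_{i<k} z_i z_iᵀ. Then Σ_{i=1}^n √(z_iᵀ A_i⁻¹ z_i) ≤ √(2 d n·log(c + n/d)) + √(2 n·log(c)). -/
/-!
Adding `z zᵀ` to `A` multiplies `det A` by `1 + zᵀ A⁻¹ z`. Since `x ≤ 2 log (1 + x)` on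
`[0, 2]`, a squared norm `zᵀ A⁻¹ z ≤ 2` is at most twice the increment of `log det A`, and the sum
of the squared norms is bounded by the telescoping sum
`2 log (det Aₙ / det A₀) = 2 log det (A₀⁻¹ Aₙ)`. The AM-GM inequality for the eigenvalues bounds
this determinant by a power of the normalized trace of `A₀⁻¹ Aₙ`, which is explicit, and the
Cauchy-Schwarz inequality passes from squared norms to norms.
-/

section Real

lemma sum_sqrt_le_sqrt_card_mul_sum {α : Type*} (s : Finset α) {f : α → ℝ}
    (hf : ∀ i ∈ s, 0 ≤ f i) : ∑ i ∈ s, √(f i) ≤ √(s.card * ∑ i ∈ s, f i) := by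
  refine Real.le_sqrt_of_sq_le ?_
  calc (∑ i ∈ s, √(f i)) ^ 2 ≤ s.card * ∑ i ∈ s, √(f i) ^ 2 := sq_sum_le_card_mul_sum_sq
    _ = s.card * ∑ i ∈ s, f i := by
      rw [Finset.sum_congr rfl fun i hi => Real.sq_sqrt (hf i hi)]

lemma le_two_mul_log_one_add {x : ℝ} (h₀ : 0 ≤ x) (h₂ : x ≤ 2) : x ≤ 2 * Real.log (1 + x) := by
  have h : x / 2 ≤ 2 * x / (x + 2) := by
    rw [div_le_div_iff₀ two_pos (by positivity)]
    nlinarith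
  linarith [Real.le_log_one_add_of_nonneg h₀]

end Real

section Matrix

open Matrix
open scoped MatrixOrder

variable {ι : Type*}

lemma posSemidef_sum_vecMulVec_self [Finite ι] {α : Type*} (s : Finset α)
    (z : α → ι → ℝ) : (∑ i ∈ s, vecMulVec (z i) (z i)).PosSemidef :=
  have := Fintype.ofFinite ι
  posSemidef_sum s fun i _ => posSemidef_vecMulVec_self_star (z i)

variable [Fintype ι] [DecidableEq ι]

lemma det_add_vecMulVec {R : Type*} [CommRing R] {A : Matrix ι ι R} (hA : IsUnit A.det)
    (u v : ι → R) : (A + vecMulVec u v).det = A.det * (1 + v ⬝ᵥ A⁻¹ *ᵥ u) := by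
  have hfactor : A + vecMulVec u v = A * (1 + vecMulVec (A⁻¹ *ᵥ u) v) := by
    rw [mul_add, mul_one, mul_vecMulVec, mulVec_mulVec, mul_nonsing_inv _ hA, one_mulVec]
  rw [hfactor, det_mul, vecMulVec_eq Unit, det_one_add_replicateCol_mul_replicateRow]

lemma dotProduct_inv_mulVec_nonneg {A : Matrix ι ι ℝ} (hA : A.PosSemidef) (z : ι → ℝ) :
    0 ≤ z ⬝ᵥ A⁻¹ *ᵥ z :=
  hA.inv.dotProduct_mulVec_nonneg z

lemma dotProduct_inv_smul_one_mulVec {K : Type*} [Field K] {c : K} (hc : c ≠ 0) (x : ι → K) :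
    x ⬝ᵥ (c • (1 : Matrix ι ι K))⁻¹ *ᵥ x = (x ⬝ᵥ x) / c := by
  have hinv : (c • (1 : Matrix ι ι K))⁻¹ = c⁻¹ • 1 := inv_eq_left_inv (by simp [smul_smul, hc])
  rw [hinv, smul_mulVec, one_mulVec, dotProduct_smul, smul_eq_mul, inv_mul_eq_div]

lemma dotProduct_inv_add_mulVec_le {A B : Matrix ι ι ℝ} (hA : A.PosDef) (hB : B.PosSemidef)
    (z : ι → ℝ) : z ⬝ᵥ (A + B)⁻¹ *ᵥ z ≤ z ⬝ᵥ A⁻¹ *ᵥ z := by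
  set x := A⁻¹ *ᵥ z with hx
  set y := (A + B)⁻¹ *ᵥ z with hy
  have hAx : A *ᵥ x = z := by
    rw [hx, mulVec_mulVec, mul_nonsing_inv _ hA.det_pos.ne'.isUnit, one_mulVec]
  have hABy : A *ᵥ y + B *ᵥ y = z := by
    rw [← add_mulVec, hy, mulVec_mulVec,
      mul_nonsing_inv _ (hA.add_posSemidef hB).det_pos.ne'.isUnit, one_mulVec]
  have hxAy : x ⬝ᵥ A *ᵥ y = z ⬝ᵥ y := by
    rw [dotProduct_mulVec, ← mulVec_transpose, ← conjTranspose_eq_transpose_of_trivial,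
      hA.isHermitian.eq, hAx]
  have hyy : y ⬝ᵥ A *ᵥ y + y ⬝ᵥ B *ᵥ y = z ⬝ᵥ y := by
    rw [← dotProduct_add, hABy, dotProduct_comm]
  have hB_nonneg : 0 ≤ y ⬝ᵥ B *ᵥ y := hB.dotProduct_mulVec_nonneg y
  -- Completing the square: `zᵀ x - 2 zᵀ y + yᵀ A y = (x - y)ᵀ A (x - y)`.
  have hsq : 0 ≤ (x - y) ⬝ᵥ A *ᵥ (x - y) := hA.posSemidef.dotProduct_mulVec_nonneg (x - y)
  rw [mulVec_sub, sub_dotProduct, dotProduct_sub, dotProduct_sub, hAx, hxAy, dotProduct_comm x,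
    dotProduct_comm y z] at hsq
  linarith

lemma det_le_trace_div_card_pow [Nonempty ι] {A : Matrix ι ι ℝ} (hA : A.PosSemidef) :
    A.det ≤ (A.trace / Fintype.card ι) ^ Fintype.card ι := by
  have hdet : A.det = ∏ i, hA.isHermitian.eigenvalues i :=
    hA.isHermitian.det_eq_prod_eigenvalues
  have htrace : A.trace = ∑ i, hA.isHermitian.eigenvalues i :=
    hA.isHermitian.trace_eq_sum_eigenvalues
  have hprod : 0 ≤ ∏ i, hA.isHermitian.eigenvalues i :=
    Finset.prod_nonneg fun i _ => hA.eigenvalues_nonneg i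
  have amgm := Real.geom_mean_le_arith_mean Finset.univ (fun _ => 1)
    hA.isHermitian.eigenvalues (fun _ _ => zero_le_one) (by simp [Fintype.card_pos (α := ι)])
    (fun i _ => hA.eigenvalues_nonneg i)
  simp only [Real.rpow_one, one_mul, Finset.sum_const, Finset.card_univ, nsmul_eq_mul,
    mul_one] at amgm
  rw [hdet, htrace, ← Real.rpow_inv_natCast_pow hprod (Fintype.card_ne_zero (α := ι))]
  gcongr

lemma det_mul_le_trace_div_card_pow [Nonempty ι] {A B : Matrix ι ι ℝ} (hA : A.PosSemidef)
    (hB : B.PosSemidef) :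
    (A * B).det ≤ ((A * B).trace / Fintype.card ι) ^ Fintype.card ι := by
  -- `A * B` need not be symmetric, but it has the determinant and the trace of `√A * B * √A`.
  set S := CFC.sqrt A
  have hS : S * S = A := CFC.sqrt_mul_sqrt_self A hA.nonneg
  have hSH : Sᴴ = S := (CFC.sqrt_nonneg A).posSemidef.isHermitian.eq
  have hSBS : (S * B * S).PosSemidef := by
    simpa only [hSH] using hB.mul_mul_conjTranspose_same S
  have hdet : (S * B * S).det = (A * B).det := by rw [← hS]; simp only [det_mul]; ring
  have htrace : (S * B * S).trace = (A * B).trace := by rw [trace_mul_cycle, hS]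
  simpa only [hdet, htrace] using det_le_trace_div_card_pow hSBS

end Matrix

section RegularizedGram

open Matrix

variable {ι : Type*}

/-- The Gram matrix `V + ∑_{i < k} zᵢ zᵢᵀ` of the first `k` vectors of the sequence `z`, regularized
by `V`. The vectors are indexed from `0`, so `z k` is the first vector that does not enter it. -/
def regularizedGram (V : Matrix ι ι ℝ) (z : ℕ → ι → ℝ) (k : ℕ) : Matrix ι ι ℝ :=
  V + ∑ i ∈ Finset.range k, vecMulVec (z i) (z i)

namespace regularizedGram

variable {V : Matrix ι ι ℝ} {z : ℕ → ι → ℝ}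

lemma posDef [Finite ι] (hV : V.PosDef) (z : ℕ → ι → ℝ) (k : ℕ) :
    (regularizedGram V z k).PosDef :=
  hV.add_posSemidef (posSemidef_sum_vecMulVec_self _ z)

variable [Fintype ι] [DecidableEq ι]

lemma det_succ {k : ℕ} (hk : IsUnit (regularizedGram V z k).det) :
    (regularizedGram V z (k + 1)).det =
      (regularizedGram V z k).det * (1 + z k ⬝ᵥ (regularizedGram V z k)⁻¹ *ᵥ z k) := by
  have hsucc : regularizedGram V z (k + 1) = regularizedGram V z k + vecMulVec (z k) (z k) := by
    rw [regularizedGram, Finset.sum_range_succ, ← add_assoc, regularizedGram]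
  rw [hsucc, det_add_vecMulVec hk]

lemma trace_inv_mul (hV : IsUnit V.det) (z : ℕ → ι → ℝ) (k : ℕ) :
    (V⁻¹ * regularizedGram V z k).trace =
      Fintype.card ι + ∑ i ∈ Finset.range k, z i ⬝ᵥ V⁻¹ *ᵥ z i := by
  simp only [regularizedGram, mul_add, nonsing_inv_mul _ hV, trace_add,
    trace_one, Finset.mul_sum, trace_sum, mul_vecMulVec, trace_vecMulVec, dotProduct_comm (z _)]

lemma dotProduct_inv_mulVec_le (hV : V.PosDef) (z : ℕ → ι → ℝ) (k : ℕ) (x : ι → ℝ) :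
    x ⬝ᵥ (regularizedGram V z k)⁻¹ *ᵥ x ≤ x ⬝ᵥ V⁻¹ *ᵥ x :=
  dotProduct_inv_add_mulVec_le hV (posSemidef_sum_vecMulVec_self _ z) x

lemma log_det_div_det_le [Nonempty ι] (hV : V.PosDef) (z : ℕ → ι → ℝ) (k : ℕ) :
    Real.log ((regularizedGram V z k).det / V.det) ≤ Fintype.card ι *
      Real.log (1 + (∑ i ∈ Finset.range k, z i ⬝ᵥ V⁻¹ *ᵥ z i) / Fintype.card ι) := by
  have hdet : (V⁻¹ * regularizedGram V z k).det = (regularizedGram V z k).det / V.det := by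
    rw [det_mul, det_nonsing_inv, Ring.inverse_eq_inv', inv_mul_eq_div]
  have htrace : (V⁻¹ * regularizedGram V z k).trace / Fintype.card ι =
      1 + (∑ i ∈ Finset.range k, z i ⬝ᵥ V⁻¹ *ᵥ z i) / Fintype.card ι := by
    rw [trace_inv_mul hV.det_pos.ne'.isUnit, add_div,
      div_self (Nat.cast_ne_zero.2 Fintype.card_ne_zero)]
  rw [← Real.log_pow, ← htrace, ← hdet]
  refine Real.log_le_log ?_
    (det_mul_le_trace_div_card_pow hV.inv.posSemidef (posDef hV z k).posSemidef)
  rw [hdet]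
  exact div_pos (posDef hV z k).det_pos hV.det_pos

lemma sum_dotProduct_inv_mulVec_le (hV : V.PosDef) {n : ℕ}
    (hz : ∀ i < n, z i ⬝ᵥ V⁻¹ *ᵥ z i ≤ 2) :
    ∑ i ∈ Finset.range n, z i ⬝ᵥ (regularizedGram V z i)⁻¹ *ᵥ z i ≤
      2 * Real.log ((regularizedGram V z n).det / V.det) := by
  set L : ℕ → ℝ := fun i => Real.log (regularizedGram V z i).det with hL
  have hstep : ∀ i ∈ Finset.range n,
      z i ⬝ᵥ (regularizedGram V z i)⁻¹ *ᵥ z i ≤ 2 * (L (i + 1) - L i) := by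
    intro i hi
    have h₀ := dotProduct_inv_mulVec_nonneg (posDef hV z i).posSemidef (z i)
    have h₂ := (dotProduct_inv_mulVec_le hV z i (z i)).trans (hz i (Finset.mem_range.1 hi))
    simp only [hL]
    have hdet := (posDef hV z i).det_pos.ne'
    rw [det_succ hdet.isUnit, Real.log_mul hdet (by positivity), add_sub_cancel_left]
    exact le_two_mul_log_one_add h₀ h₂
  calc ∑ i ∈ Finset.range n, z i ⬝ᵥ (regularizedGram V z i)⁻¹ *ᵥ z i
      ≤ ∑ i ∈ Finset.range n, 2 * (L (i + 1) - L i) := Finset.sum_le_sum hstep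
    _ = 2 * (L n - L 0) := by rw [← Finset.mul_sum, Finset.sum_range_sub]
    _ = 2 * Real.log ((regularizedGram V z n).det / V.det) := by
      rw [Real.log_div (posDef hV z n).det_pos.ne' hV.det_pos.ne']
      simp only [hL, regularizedGram, Finset.sum_range_zero, add_zero]

end regularizedGram

theorem elliptical_potential_sqrt_general [Fintype ι] [DecidableEq ι] [Nonempty ι]
    {V : Matrix ι ι ℝ} (hV : V.PosDef) {z : ℕ → ι → ℝ} {n : ℕ}
    (hz : ∀ i < n, z i ⬝ᵥ V⁻¹ *ᵥ z i ≤ 2) :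
    ∑ i ∈ Finset.range n, √(z i ⬝ᵥ (regularizedGram V z i)⁻¹ *ᵥ z i) ≤
      √(2 * Fintype.card ι * n *
        Real.log (1 + (∑ i ∈ Finset.range n, z i ⬝ᵥ V⁻¹ *ᵥ z i) / Fintype.card ι)) := by
  set logBound :=
    Real.log (1 + (∑ i ∈ Finset.range n, z i ⬝ᵥ V⁻¹ *ᵥ z i) / Fintype.card ι)
  have hsum : ∑ i ∈ Finset.range n, z i ⬝ᵥ (regularizedGram V z i)⁻¹ *ᵥ z i ≤
      2 * (Fintype.card ι * logBound) :=
    (regularizedGram.sum_dotProduct_inv_mulVec_le hV hz).trans <| by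
      gcongr
      exact regularizedGram.log_det_div_det_le hV z n
  calc ∑ i ∈ Finset.range n, √(z i ⬝ᵥ (regularizedGram V z i)⁻¹ *ᵥ z i)
      ≤ √(n * ∑ i ∈ Finset.range n, z i ⬝ᵥ (regularizedGram V z i)⁻¹ *ᵥ z i) := by
        simpa only [Finset.card_range] using sum_sqrt_le_sqrt_card_mul_sum (Finset.range n)
          fun i _ =>
            dotProduct_inv_mulVec_nonneg (regularizedGram.posDef hV z i).posSemidef (z i)
    _ ≤ √(n * (2 * (Fintype.card ι * logBound))) := by gcongr
    _ = √(2 * Fintype.card ι * n * logBound) := by ring_nf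

end RegularizedGram

open Matrix in
/-- **Elliptical potential lemma (square-root version).** For vectors `z₁,…,zₙ ∈ ℝ^d` with
`‖zᵢ‖₂ ≤ 1` and Gram matrices `Aₖ = c·I + ∑_{i<k} zᵢzᵢᵀ` (with `c ≥ 1`, `d ≥ 1`),
`∑_{i=1}^n ‖zᵢ‖_{Aᵢ⁻¹} ≤ √(2dn·log(c + n/d)) + √(2n·log c)`. -/
theorem elliptical_potential_sqrt
    (d : ℕ) (hd : 1 ≤ d) (c : ℝ) (hc : 1 ≤ c) (n : ℕ)
    (z : ℕ → Fin d → ℝ)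
    (hz : ∀ i < n, Real.sqrt (∑ j, z i j ^ 2) ≤ 1)
    (A : ℕ → Matrix (Fin d) (Fin d) ℝ)
    (hA : ∀ k, A k = c • (1 : Matrix (Fin d) (Fin d) ℝ) +
      ∑ i ∈ Finset.range k, vecMulVec (z i) (z i)) :
    ∑ i ∈ Finset.range n, Real.sqrt (z i ⬝ᵥ ((A i)⁻¹ *ᵥ z i))
      ≤ Real.sqrt (2 * d * n * Real.log (c + n / d)) + Real.sqrt (2 * n * Real.log c) := by
  obtain rfl : A = regularizedGram (c • 1) z := funext hA
  have : Nonempty (Fin d) := Fin.pos_iff_nonempty.1 hd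
  have hc₀ : 0 < c := zero_lt_one.trans_le hc
  have hV : (c • (1 : Matrix (Fin d) (Fin d) ℝ)).PosDef := PosDef.one.smul hc₀
  set q : ℕ → ℝ := fun i => z i ⬝ᵥ (c • (1 : Matrix (Fin d) (Fin d) ℝ))⁻¹ *ᵥ z i
  have hq₀ : 0 ≤ ∑ i ∈ Finset.range n, q i :=
    Finset.sum_nonneg fun i _ => dotProduct_inv_mulVec_nonneg hV.posSemidef (z i)
  have hq₁ : ∀ i < n, q i ≤ 1 := fun i hi => by
    have hzz : z i ⬝ᵥ z i ≤ 1 := by simpa only [dotProduct, ← sq, Real.sqrt_le_one] using hz i hi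
    simpa only [q, dotProduct_inv_smul_one_mulVec hc₀.ne'] using
      div_le_one_of_le₀ (hzz.trans hc) hc₀.le
  have hqn : ∑ i ∈ Finset.range n, q i ≤ n := by
    simpa using Finset.sum_le_card_nsmul _ q 1 fun i hi => hq₁ i (Finset.mem_range.1 hi)
  calc ∑ i ∈ Finset.range n, √(z i ⬝ᵥ ((regularizedGram (c • 1) z i)⁻¹ *ᵥ z i))
      ≤ √(2 * d * n * Real.log (1 + (∑ i ∈ Finset.range n, q i) / d)) := by
        simpa only [Fintype.card_fin] using
          elliptical_potential_sqrt_general hV fun i hi => (hq₁ i hi).trans one_le_two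
    _ ≤ √(2 * d * n * Real.log (c + n / d)) := by gcongr
    _ ≤ √(2 * d * n * Real.log (c + n / d)) + √(2 * n * Real.log c) :=
        le_add_of_nonneg_right (Real.sqrt_nonneg _)
end

section
/- Let M be a real-valued random variable with cumulative distribution function G(x) = P(M ≤ x), and let v₁, v₀ be random variables taking values in [0,1] such that the pair (v₁, v₀) is independent of M. Fix b ∈ ℝ, δ ∈ (0,1), and ĝ ∈ (0,1) with |ĝ − G(b)| ≤ δ·√(G(b)(1−G(b))) + δ². Define the truncated inverse-propensity-weighted estimator ẽ = 1[M ≤ b]·v₁ / max{δ², ĝ} − 1[M > b]·v₀ / max{δ², 1−ĝ}. Then Var(ẽ) ≤ 16·max{1/ĝ, 1/(1−ĝ)} ≤ 16/(ĝ(1−ĝ)). -/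
/-! The second moment of the estimator is at most `G(b) / A² + (1 - G(b)) / B²`, where `A` and `B`
are the truncated propensities. The accuracy of `ĝ` forces `G(b) ≤ 4 A`: if `4 A < G(b)`, then
`δ² ≤ A < G(b) / 4`, hence `δ √G(b) < G(b) / 2` and the error bound gives
`G(b) ≤ ĝ + δ √G(b) + δ² < G(b)`. Symmetrically `1 - G(b) ≤ 4 B`, so that the variance is at most
`4 / ĝ + 4 / (1 - ĝ) = 4 / (ĝ (1 - ĝ))`. -/

open MeasureTheory ProbabilityTheory

section Propensity

variable {p g δ : ℝ}

lemma le_four_mul_max_of_le_add_sqrt (hg : g ≤ p + δ * √(g * (1 - g)) + δ ^ 2) :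
    g ≤ 4 * max (δ ^ 2) p := by
  by_contra! hlt
  have hδ : 4 * δ ^ 2 < g := by linarith [le_max_left (δ ^ 2) p]
  have hp : 4 * p < g := by linarith [le_max_right (δ ^ 2) p]
  have hg₀ : 0 ≤ g := by linarith [sq_nonneg δ]
  have hsqrt : √(g * (1 - g)) ≤ √g := Real.sqrt_le_sqrt (by linarith [sq_nonneg g])
  have habs : |δ| ≤ √g / 2 := by
    rw [le_div_iff₀ two_pos]
    exact Real.le_sqrt_of_sq_le (by rw [mul_pow, sq_abs]; linarith)
  have hprod : δ * √(g * (1 - g)) ≤ g / 2 :=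
    calc δ * √(g * (1 - g)) ≤ |δ| * √(g * (1 - g)) := by gcongr; exact le_abs_self δ
      _ ≤ √g / 2 * √g := by gcongr
      _ = g / 2 := by rw [div_mul_eq_mul_div, Real.mul_self_sqrt hg₀]
  linarith

lemma inv_sq_mul_le_mul_inv {x m c : ℝ} (hp : 0 < p) (hpm : p ≤ m) (hc : 0 ≤ c)
    (hx : x ≤ c * m) : m⁻¹ ^ 2 * x ≤ c * p⁻¹ := by
  have hm : 0 < m := hp.trans_le hpm
  calc m⁻¹ ^ 2 * x ≤ m⁻¹ ^ 2 * (c * m) := by gcongr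
    _ = c * m⁻¹ := by field_simp
    _ ≤ c * p⁻¹ := by gcongr

lemma inv_add_inv_one_sub (hp : p ∈ Set.Ioo 0 1) : p⁻¹ + (1 - p)⁻¹ = 1 / (p * (1 - p)) := by
  rw [inv_add_inv hp.1.ne' (sub_pos.2 hp.2).ne', add_sub_cancel]

lemma mul_max_one_div_le_div {c : ℝ} (hp : p ∈ Set.Ioo 0 1) (hc : 0 ≤ c) :
    c * max (1 / p) (1 / (1 - p)) ≤ c / (p * (1 - p)) := by
  have hp₁ : 0 ≤ p⁻¹ := inv_nonneg.2 hp.1.le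
  have hp₀ : 0 ≤ (1 - p)⁻¹ := inv_nonneg.2 (sub_nonneg.2 hp.2.le)
  rw [div_eq_mul_one_div c, ← inv_add_inv_one_sub hp, one_div, one_div]
  exact mul_le_mul_of_nonneg_left (max_le_add_of_nonneg hp₁ hp₀) hc

lemma div_le_mul_max_one_div {c d : ℝ} (hp : p ∈ Set.Ioo 0 1) (hc : 0 ≤ c) (hcd : 2 * c ≤ d) :
    c / (p * (1 - p)) ≤ d * max (1 / p) (1 / (1 - p)) := by
  have hmax : 0 ≤ max (1 / p) (1 / (1 - p)) := le_max_of_le_left (one_div_nonneg.2 hp.1.le)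
  calc c / (p * (1 - p))
    _ = c * (1 / p + 1 / (1 - p)) := by
      rw [div_eq_mul_one_div, ← inv_add_inv_one_sub hp, one_div, one_div]
    _ ≤ c * (max (1 / p) (1 / (1 - p)) + max (1 / p) (1 / (1 - p))) := by
      gcongr
      exacts [le_max_left _ _, le_max_right _ _]
    _ = 2 * c * max (1 / p) (1 / (1 - p)) := by ring
    _ ≤ d * max (1 / p) (1 / (1 - p)) := by gcongr

end Propensity

section Estimator

variable {Ω : Type*}

/-- The inverse-propensity-weighted estimator of the treatment effect `E[v₁ - v₀]`, where `S` is the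
event of being treated, `p` is the estimate of its probability and the propensities `p` and `1 - p`
are truncated from below at `ε`. -/
noncomputable def truncatedIPW (S : Set Ω) (v₁ v₀ : Ω → ℝ) (ε p : ℝ) (ω : Ω) : ℝ :=
  S.indicator (fun ω ↦ v₁ ω / max ε p) ω - Sᶜ.indicator (fun ω ↦ v₀ ω / max ε (1 - p)) ω

lemma truncatedIPW_preimage_Iic (M v₁ v₀ : Ω → ℝ) (b ε p : ℝ) :
    truncatedIPW (M ⁻¹' Set.Iic b) v₁ v₀ ε p = fun ω ↦
      (if M ω ≤ b then v₁ ω / max ε p else 0) - (if b < M ω then v₀ ω / max ε (1 - p) else 0) := by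
  ext ω
  by_cases h : M ω ≤ b
  · simp [truncatedIPW, h, h.not_gt]
  · simp [truncatedIPW, h, not_le.1 h]

end Estimator

section Variance

variable {Ω : Type*} [MeasurableSpace Ω] {μ : Measure Ω} [IsProbabilityMeasure μ]
  {S : Set Ω} {v₁ v₀ : Ω → ℝ}

lemma variance_le_of_abs_le_of_abs_le_compl {X : Ω → ℝ} {c d : ℝ}
    (hX : AEStronglyMeasurable X μ) (hS : MeasurableSet S)
    (hc : ∀ᵐ ω ∂μ, ω ∈ S → |X ω| ≤ c) (hd : ∀ᵐ ω ∂μ, ω ∉ S → |X ω| ≤ d) :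
    Var[X; μ] ≤ c ^ 2 * μ.real S + d ^ 2 * μ.real Sᶜ := by
  have hcint : Integrable (S.indicator fun _ ↦ c ^ 2) μ := (integrable_const _).indicator hS
  have hdint : Integrable (Sᶜ.indicator fun _ ↦ d ^ 2) μ := (integrable_const _).indicator hS.compl
  have hsq : X ^ 2 ≤ᵐ[μ] S.indicator (fun _ ↦ c ^ 2) + Sᶜ.indicator (fun _ ↦ d ^ 2) := by
    filter_upwards [hc, hd] with ω hcω hdω
    by_cases hω : ω ∈ S
    · simpa [hω] using sq_le_sq.2 ((hcω hω).trans (le_abs_self c))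
    · simpa [hω] using sq_le_sq.2 ((hdω hω).trans (le_abs_self d))
  calc Var[X; μ] ≤ ∫ ω, (X ^ 2) ω ∂μ := variance_le_expectation_sq hX
    _ ≤ ∫ ω, (S.indicator (fun _ ↦ c ^ 2) + Sᶜ.indicator (fun _ ↦ d ^ 2)) ω ∂μ :=
      integral_mono_of_nonneg (.of_forall fun ω ↦ sq_nonneg (X ω)) (hcint.add hdint) hsq
    _ = c ^ 2 * μ.real S + d ^ 2 * μ.real Sᶜ := by
      rw [integral_add' hcint hdint, integral_indicator_const _ hS,
        integral_indicator_const _ hS.compl, smul_eq_mul, smul_eq_mul, mul_comm, mul_comm (d ^ 2)]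

lemma variance_truncatedIPW_le {ε p : ℝ} (hS : MeasurableSet S)
    (hv₁ : AEMeasurable v₁ μ) (hv₀ : AEMeasurable v₀ μ)
    (hv₁_le : ∀ᵐ ω ∂μ, |v₁ ω| ≤ 1) (hv₀_le : ∀ᵐ ω ∂μ, |v₀ ω| ≤ 1) (hp : p ∈ Set.Ioo 0 1) :
    Var[truncatedIPW S v₁ v₀ ε p; μ] ≤
      (max ε p)⁻¹ ^ 2 * μ.real S + (max ε (1 - p))⁻¹ ^ 2 * μ.real Sᶜ := by
  have hp₁ : 0 < max ε p := lt_max_of_lt_right hp.1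
  have hp₀ : 0 < max ε (1 - p) := lt_max_of_lt_right (sub_pos.2 hp.2)
  refine variance_le_of_abs_le_of_abs_le_compl ?_ hS ?_ ?_
  · exact (((hv₁.div_const _).indicator hS).sub
      ((hv₀.div_const _).indicator hS.compl)).aestronglyMeasurable
  · filter_upwards [hv₁_le] with ω hω hωS
    simpa [truncatedIPW, hωS, abs_div, abs_of_pos hp₁] using div_le_div_of_nonneg_right hω hp₁.le
  · filter_upwards [hv₀_le] with ω hω hωS
    simpa [truncatedIPW, hωS, abs_div, abs_of_pos hp₀] using div_le_div_of_nonneg_right hω hp₀.le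

theorem truncated_ipw_variance_general {δ p : ℝ} (hS : MeasurableSet S)
    (hv₁ : AEMeasurable v₁ μ) (hv₀ : AEMeasurable v₀ μ)
    (hv₁_le : ∀ᵐ ω ∂μ, |v₁ ω| ≤ 1) (hv₀_le : ∀ᵐ ω ∂μ, |v₀ ω| ≤ 1) (hp : p ∈ Set.Ioo 0 1)
    (hest : |p - μ.real S| ≤ δ * √(μ.real S * (1 - μ.real S)) + δ ^ 2) :
    Var[truncatedIPW S v₁ v₀ (δ ^ 2) p; μ] ≤ 4 / (p * (1 - p)) := by
  obtain ⟨hlower, hupper⟩ := abs_le.1 hest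
  have hS_le : μ.real S ≤ 4 * max (δ ^ 2) p := le_four_mul_max_of_le_add_sqrt (by linarith)
  have hSc_le : μ.real Sᶜ ≤ 4 * max (δ ^ 2) (1 - p) := by
    rw [probReal_compl_eq_one_sub hS]
    refine le_four_mul_max_of_le_add_sqrt ?_
    rw [sub_sub_cancel, mul_comm (1 - μ.real S)]
    linarith
  calc Var[truncatedIPW S v₁ v₀ (δ ^ 2) p; μ]
    _ ≤ (max (δ ^ 2) p)⁻¹ ^ 2 * μ.real S + (max (δ ^ 2) (1 - p))⁻¹ ^ 2 * μ.real Sᶜ :=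
      variance_truncatedIPW_le hS hv₁ hv₀ hv₁_le hv₀_le hp
    _ ≤ 4 * p⁻¹ + 4 * (1 - p)⁻¹ :=
      add_le_add (inv_sq_mul_le_mul_inv hp.1 (le_max_right _ _) zero_le_four hS_le)
        (inv_sq_mul_le_mul_inv (sub_pos.2 hp.2) (le_max_right _ _) zero_le_four hSc_le)
    _ = 4 / (p * (1 - p)) := by rw [← mul_add, inv_add_inv_one_sub hp, mul_one_div]

end Variance

open MeasureTheory ProbabilityTheory in
/-- **Variance of the truncated inverse-propensity-weighted estimator.** In the setting of
the bias lemma, the truncated IPW estimator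
`ẽ = 1[M ≤ b]v₁/max{δ², ĝ} − 1[M > b]v₀/max{δ², 1−ĝ}` satisfies
`Var(ẽ) ≤ 16·max{1/ĝ, 1/(1−ĝ)} ≤ 16/(ĝ(1−ĝ))`. -/
theorem truncated_ipw_variance
    {Ω : Type*} [MeasurableSpace Ω] (μ : Measure Ω) [IsProbabilityMeasure μ]
    (M v1 v0 : Ω → ℝ)
    (hMmeas : Measurable M) (hv1meas : Measurable v1) (hv0meas : Measurable v0)
    (hv1r : ∀ ω, v1 ω ∈ Set.Icc (0 : ℝ) 1) (hv0r : ∀ ω, v0 ω ∈ Set.Icc (0 : ℝ) 1)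
    (hindep : IndepFun (fun ω => (v1 ω, v0 ω)) M μ)
    (b : ℝ) (δ : ℝ) (hδ : δ ∈ Set.Ioo (0 : ℝ) 1)
    (ghat : ℝ) (hghat : ghat ∈ Set.Ioo (0 : ℝ) 1)
    (g : ℝ) (hg : g = (μ {ω | M ω ≤ b}).toReal)
    (hest : |ghat - g| ≤ δ * Real.sqrt (g * (1 - g)) + δ ^ 2) :
    variance (fun ω => (if M ω ≤ b then v1 ω / max (δ ^ 2) ghat else 0)
        - (if b < M ω then v0 ω / max (δ ^ 2) (1 - ghat) else 0)) μ
      ≤ 16 * max (1 / ghat) (1 / (1 - ghat)) ∧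
    16 * max (1 / ghat) (1 / (1 - ghat)) ≤ 16 / (ghat * (1 - ghat)) := by
  have habs {x : ℝ} (hx : x ∈ Set.Icc 0 1) : |x| ≤ 1 := abs_le.2 ⟨by linarith [hx.1], hx.2⟩
  have hvar := truncated_ipw_variance_general (hMmeas measurableSet_Iic) hv1meas.aemeasurable
    hv0meas.aemeasurable (.of_forall fun ω ↦ habs (hv1r ω)) (.of_forall fun ω ↦ habs (hv0r ω))
    hghat (hg ▸ hest)
  rw [truncatedIPW_preimage_Iic] at hvar
  exact ⟨hvar.trans (div_le_mul_max_one_div hghat (by norm_num) (by norm_num)),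
    mul_max_one_div_le_div hghat (by norm_num)⟩
end
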